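/- arXiv:1206.5822 — 2 statements merged into one kernel-verified Lean document; each statement's English description precedes it below -/
import Mathlib

section
/- The domino basis S_3 is 4-rigid: for all positive semidefinite a, b ∈ M_3(ℂ) with ⟨ψ_i, (a⊗b) ψ_i⟩ ≠ 0 for each of the nine domino states ψ_i, one has ‖(a⊗b)/tr(a⊗b) − I/9‖_max ≤ 4δ, where δ is the disturbance of a⊗b on the domino states. -/
open Matrix Kronecker
open scoped ComplexOrder

/-- The disturbance `δ` of the product operator `a ⊗ b` on the family of states `ψ`. -/
noncomputable def disturbance {n dA dB : ℕ} (ψ : Fin n → Fin dA × Fin dB → ℂ)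
    (a : Matrix (Fin dA) (Fin dA) ℂ) (b : Matrix (Fin dB) (Fin dB) ℂ) : ℝ :=
  ⨆ p : {q : Fin n × Fin n // q.1 ≠ q.2},
    ‖star (ψ p.1.1) ⬝ᵥ (a ⊗ₖ b).mulVec (ψ p.1.2)‖ /
      Real.sqrt ((star (ψ p.1.1) ⬝ᵥ (a ⊗ₖ b).mulVec (ψ p.1.1)).re *
        (star (ψ p.1.2) ⬝ᵥ (a ⊗ₖ b).mulVec (ψ p.1.2)).re)

/-- The standard basis vector `|i⟩` of `ℂ³`. -/
noncomputable def e3 (i : Fin 3) : Fin 3 → ℂ := fun k => if k = i then 1 else 0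

/-- `|i + j⟩ = (|i⟩ + |j⟩)/√2`. -/
noncomputable def pl (i j : Fin 3) : Fin 3 → ℂ := fun k => (e3 i k + e3 j k) / (Real.sqrt 2 : ℂ)

/-- `|i − j⟩ = (|i⟩ − |j⟩)/√2`. -/
noncomputable def mi (i j : Fin 3) : Fin 3 → ℂ := fun k => (e3 i k - e3 j k) / (Real.sqrt 2 : ℂ)

/-- The product vector `α ⊗ β` in `ℂ³ ⊗ ℂ³`. -/
noncomputable def kp (α β : Fin 3 → ℂ) : Fin 3 × Fin 3 → ℂ := fun p => α p.1 * β p.2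

/-- The nine domino states in `ℂ³ ⊗ ℂ³`. -/
noncomputable def dominoStates : Fin 9 → Fin 3 × Fin 3 → ℂ :=
  ![kp (e3 1) (e3 1),
    kp (e3 0) (pl 0 1), kp (e3 0) (mi 0 1),
    kp (e3 2) (pl 1 2), kp (e3 2) (mi 1 2),
    kp (pl 1 2) (e3 0), kp (mi 1 2) (e3 0),
    kp (pl 0 1) (e3 2), kp (mi 0 1) (e3 2)]

/-- The largest absolute value of an entry of a matrix. -/
noncomputable def maxEntry {m n : Type*} [Fintype m] [Fintype n] (M : Matrix m n ℂ) : ℝ :=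
  ⨆ p : m × n, ‖M p.1 p.2‖

/-- The sesquilinear form `⟨u, M v⟩` of a matrix. -/
noncomputable def sesqForm {n : Type*} [Fintype n] (M : Matrix n n ℂ) (u v : n → ℂ) : ℂ :=
  star u ⬝ᵥ M.mulVec v

lemma sesqForm_kp (a b : Matrix (Fin 3) (Fin 3) ℂ) (α β α' β' : Fin 3 → ℂ) :
    star (kp α β) ⬝ᵥ (a ⊗ₖ b).mulVec (kp α' β') = sesqForm a α α' * sesqForm b β β' := by
  simp only [sesqForm, dotProduct, mulVec, kp, Fintype.sum_prod_type, Fin.sum_univ_three,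
    kroneckerMap_apply, Pi.star_apply, star_mul']
  ring

lemma sesqForm_e3 (M : Matrix (Fin 3) (Fin 3) ℂ) (i j : Fin 3) :
    sesqForm M (e3 i) (e3 j) = M i j := by
  simp [sesqForm, dotProduct, mulVec, e3, apply_ite]

lemma sesqForm_re_nonneg {M : Matrix (Fin 3) (Fin 3) ℂ} (hM : M.PosSemidef) (u : Fin 3 → ℂ) :
    0 ≤ (sesqForm M u u).re :=
  (Complex.le_def.1 (hM.dotProduct_mulVec_nonneg u)).1

lemma sesqForm_im_eq_zero {M : Matrix (Fin 3) (Fin 3) ℂ} (hM : M.PosSemidef) (u : Fin 3 → ℂ) :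
    (sesqForm M u u).im = 0 :=
  (Complex.le_def.1 (hM.dotProduct_mulVec_nonneg u)).2.symm

lemma diag_re_nonneg {M : Matrix (Fin 3) (Fin 3) ℂ} (hM : M.PosSemidef) (i : Fin 3) :
    0 ≤ (M i i).re :=
  (Complex.le_def.1 (hM.diag_nonneg (i := i))).1

lemma diag_eq_re {M : Matrix (Fin 3) (Fin 3) ℂ} (hM : M.PosSemidef) (i : Fin 3) :
    M i i = ((M i i).re : ℂ) :=
  Complex.ext rfl (Complex.le_def.1 (hM.diag_nonneg (i := i))).2.symm

lemma trace_eq_re {M : Matrix (Fin 3) (Fin 3) ℂ} (hM : M.PosSemidef) :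
    M.trace = (M.trace.re : ℂ) :=
  Complex.ext rfl (Complex.le_def.1 hM.trace_nonneg).2.symm

lemma re_trace (M : Matrix (Fin 3) (Fin 3) ℂ) :
    M.trace.re = (M 0 0).re + (M 1 1).re + (M 2 2).re := by
  simp [trace, Fin.sum_univ_three]

/-- Arithmetic mean bound on the entries of a positive semidefinite matrix. -/
lemma two_mul_norm_apply_le {M : Matrix (Fin 3) (Fin 3) ℂ} (hM : M.PosSemidef) (i j : Fin 3) :
    2 * ‖M i j‖ ≤ (M i i).re + (M j j).re := by
  have hdet := (hM.submatrix ![i, j]).det_nonneg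
  have hji : M j i = star (M i j) := (hM.1.apply j i).symm
  rw [det_fin_two] at hdet
  simp only [submatrix_apply, cons_val_zero, cons_val_one] at hdet
  rw [hji, Complex.star_def, Complex.mul_conj, diag_eq_re hM i, diag_eq_re hM j] at hdet
  have h : Complex.normSq (M i j) ≤ (M i i).re * (M j j).re := by
    have := (Complex.le_def.1 hdet).1
    simpa using this
  rw [Complex.normSq_eq_norm_sq] at h
  have hi := diag_re_nonneg hM i
  have hj := diag_re_nonneg hM j
  refine le_of_sq_le_sq ?_ (by positivity)
  nlinarith [sq_nonneg ((M i i).re - (M j j).re)]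

lemma two_mul_norm_apply_le_trace {M : Matrix (Fin 3) (Fin 3) ℂ} (hM : M.PosSemidef)
    {i j : Fin 3} (hij : i ≠ j) : 2 * ‖M i j‖ ≤ M.trace.re := by
  have h := two_mul_norm_apply_le hM i j
  have h0 := diag_re_nonneg hM 0
  have h1 := diag_re_nonneg hM 1
  have h2 := diag_re_nonneg hM 2
  rw [re_trace]
  fin_cases i <;> fin_cases j <;> simp at hij h ⊢ <;> linarith

lemma norm_apply_le_trace {M : Matrix (Fin 3) (Fin 3) ℂ} (hM : M.PosSemidef) (i j : Fin 3) :
    ‖M i j‖ ≤ M.trace.re := by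
  have h := two_mul_norm_apply_le hM i j
  have h0 := diag_re_nonneg hM 0
  have h1 := diag_re_nonneg hM 1
  have h2 := diag_re_nonneg hM 2
  rw [re_trace]
  fin_cases i <;> fin_cases j <;> simp at h ⊢ <;> linarith

/-- The disturbance controls each pair of states, with the geometric means of the
diagonal values replaced by arithmetic means. -/
lemma norm_mul_norm_le_disturbance {n : ℕ} {ψ : Fin n → Fin 3 × Fin 3 → ℂ}
    {a b : Matrix (Fin 3) (Fin 3) ℂ} (ha : a.PosSemidef) (hb : b.PosSemidef)
    (hnz : ∀ i, star (ψ i) ⬝ᵥ (a ⊗ₖ b).mulVec (ψ i) ≠ 0)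
    {i j : Fin n} (hij : i ≠ j) {α β α' β' : Fin 3 → ℂ} (hi : ψ i = kp α β) (hj : ψ j = kp α' β') :
    ‖sesqForm a α α'‖ * ‖sesqForm b β β'‖ ≤ disturbance ψ a b *
      (((sesqForm a α α).re + (sesqForm a α' α').re) / 2 *
        (((sesqForm b β β).re + (sesqForm b β' β').re) / 2)) := by
  have hδ := le_ciSup (f := fun p : {q : Fin n × Fin n // q.1 ≠ q.2} =>
    ‖star (ψ p.1.1) ⬝ᵥ (a ⊗ₖ b).mulVec (ψ p.1.2)‖ /
      Real.sqrt ((star (ψ p.1.1) ⬝ᵥ (a ⊗ₖ b).mulVec (ψ p.1.1)).re *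
        (star (ψ p.1.2) ⬝ᵥ (a ⊗ₖ b).mulVec (ψ p.1.2)).re))
    (Set.finite_range _).bddAbove ⟨(i, j), hij⟩
  change _ ≤ disturbance ψ a b at hδ
  have hni := hnz i
  have hnj := hnz j
  simp only [hi, hj, sesqForm_kp, norm_mul, Complex.mul_re, sesqForm_im_eq_zero ha,
    sesqForm_im_eq_zero hb, mul_zero, sub_zero] at hδ hni hnj
  have hpos : ∀ u v, sesqForm a u u * sesqForm b v v ≠ 0 →
      0 < (sesqForm a u u).re ∧ 0 < (sesqForm b v v).re := by
    intro u v h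
    constructor
    · refine lt_of_le_of_ne (sesqForm_re_nonneg ha u) fun h0 => h ?_
      rw [Complex.ext (z := sesqForm a u u) (w := 0) h0.symm (sesqForm_im_eq_zero ha u), zero_mul]
    · refine lt_of_le_of_ne (sesqForm_re_nonneg hb v) fun h0 => h ?_
      rw [Complex.ext (z := sesqForm b v v) (w := 0) h0.symm (sesqForm_im_eq_zero hb v), mul_zero]
  obtain ⟨hA, hB⟩ := hpos _ _ hni
  obtain ⟨hA', hB'⟩ := hpos _ _ hnj
  generalize (sesqForm a α α).re = A at *
  generalize (sesqForm b β β).re = B at *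
  generalize (sesqForm a α' α').re = A' at *
  generalize (sesqForm b β' β').re = B' at *
  have hδ0 : 0 ≤ disturbance ψ a b := le_trans (by positivity) hδ
  rw [div_le_iff₀ (by positivity)] at hδ
  refine hδ.trans (mul_le_mul_of_nonneg_left ?_ hδ0)
  rw [Real.sqrt_le_left (by positivity)]
  have h1 : A * A' ≤ ((A + A') / 2) ^ 2 := by nlinarith [sq_nonneg (A - A')]
  have h2 : B * B' ≤ ((B + B') / 2) ^ 2 := by nlinarith [sq_nonneg (B - B')]
  calc A * B * (A' * B') = (A * A') * (B * B') := by ring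
    _ ≤ ((A + A') / 2) ^ 2 * ((B + B') / 2) ^ 2 := by gcongr
    _ = _ := by ring

/-- The central domino state together with the two tiles whose first factor is the basis
vector `|p⟩`, respectively `|q⟩`. -/
noncomputable def sideTiles (p q : Fin 3) : Fin 5 → (Fin 3 → ℂ) × (Fin 3 → ℂ) :=
  ![(e3 1, e3 1), (e3 p, pl 0 1), (e3 p, mi 0 1), (e3 q, pl 1 2), (e3 q, mi 1 2)]

/-- Every pair of the side tiles is disturbed by at most `δ`. -/
def SideBound (δ : ℝ) (a b : Matrix (Fin 3) (Fin 3) ℂ) (p q : Fin 3) : Prop :=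
  ∀ m n, m ≠ n →
    ‖sesqForm a (sideTiles p q m).1 (sideTiles p q n).1‖ *
        ‖sesqForm b (sideTiles p q m).2 (sideTiles p q n).2‖ ≤
      δ * (((sesqForm a (sideTiles p q m).1 (sideTiles p q m).1).re +
          (sesqForm a (sideTiles p q n).1 (sideTiles p q n).1).re) / 2 *
        (((sesqForm b (sideTiles p q m).2 (sideTiles p q m).2).re +
          (sesqForm b (sideTiles p q n).2 (sideTiles p q n).2).re) / 2))

lemma dominoStates_eq_kp_sideTiles (m : Fin 5) :
    dominoStates ((![0, 1, 2, 3, 4] : Fin 5 → Fin 9) m) =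
      kp (sideTiles 0 2 m).1 (sideTiles 0 2 m).2 := by
  fin_cases m <;> rfl

lemma dominoStates_eq_kp_sideTiles_swap (m : Fin 5) :
    dominoStates ((![0, 7, 8, 5, 6] : Fin 5 → Fin 9) m) =
      kp (sideTiles 2 0 m).2 (sideTiles 2 0 m).1 := by
  fin_cases m <;> rfl

lemma sideBound_left {a b : Matrix (Fin 3) (Fin 3) ℂ} (ha : a.PosSemidef) (hb : b.PosSemidef)
    (hnz : ∀ i, star (dominoStates i) ⬝ᵥ (a ⊗ₖ b).mulVec (dominoStates i) ≠ 0) :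
    SideBound (disturbance dominoStates a b) a b 0 2 := fun m n hmn =>
  norm_mul_norm_le_disturbance ha hb hnz
    (fun h => hmn ((by decide : Function.Injective (![0, 1, 2, 3, 4] : Fin 5 → Fin 9)) h))
    (dominoStates_eq_kp_sideTiles m) (dominoStates_eq_kp_sideTiles n)

lemma sideBound_right {a b : Matrix (Fin 3) (Fin 3) ℂ} (ha : a.PosSemidef) (hb : b.PosSemidef)
    (hnz : ∀ i, star (dominoStates i) ⬝ᵥ (a ⊗ₖ b).mulVec (dominoStates i) ≠ 0) :
    SideBound (disturbance dominoStates a b) b a 2 0 := fun m n hmn => by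
  have h := norm_mul_norm_le_disturbance ha hb hnz
    (fun h => hmn ((by decide : Function.Injective (![0, 7, 8, 5, 6] : Fin 5 → Fin 9)) h))
    (dominoStates_eq_kp_sideTiles_swap m) (dominoStates_eq_kp_sideTiles_swap n)
  rw [mul_comm] at h
  exact h.trans_eq (by ring)

lemma sqrt_two_mul_self_complex : (Real.sqrt 2 : ℂ) * (Real.sqrt 2 : ℂ) = 2 := by
  rw [← Complex.ofReal_mul, Real.mul_self_sqrt (by norm_num)]; norm_num

lemma sqrt_two_complex_ne_zero : (Real.sqrt 2 : ℂ) ≠ 0 := by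
  simp

section Expansions

variable (M : Matrix (Fin 3) (Fin 3) ℂ) (u : Fin 3 → ℂ) (i j : Fin 3)

lemma sesqForm_pl_right :
    sesqForm M u (pl i j) = (sesqForm M u (e3 i) + sesqForm M u (e3 j)) / (Real.sqrt 2 : ℂ) := by
  simp only [sesqForm, dotProduct, mulVec, pl, Fin.sum_univ_three]
  ring

lemma sesqForm_mi_right :
    sesqForm M u (mi i j) = (sesqForm M u (e3 i) - sesqForm M u (e3 j)) / (Real.sqrt 2 : ℂ) := by
  simp only [sesqForm, dotProduct, mulVec, mi, Fin.sum_univ_three]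
  ring

lemma sesqForm_pl_left :
    sesqForm M (pl i j) u = (sesqForm M (e3 i) u + sesqForm M (e3 j) u) / (Real.sqrt 2 : ℂ) := by
  simp only [sesqForm, dotProduct, mulVec, pl, Fin.sum_univ_three, Pi.star_apply, star_div₀,
    star_add, Complex.star_def, Complex.conj_ofReal]
  ring

lemma sesqForm_mi_left :
    sesqForm M (mi i j) u = (sesqForm M (e3 i) u - sesqForm M (e3 j) u) / (Real.sqrt 2 : ℂ) := by
  simp only [sesqForm, dotProduct, mulVec, mi, Fin.sum_univ_three, Pi.star_apply, star_div₀,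
    star_sub, Complex.star_def, Complex.conj_ofReal]
  ring

lemma sesqForm_pl_pl (k l : Fin 3) :
    sesqForm M (pl i j) (pl k l) = (M i k + M j k + (M i l + M j l)) / 2 := by
  rw [sesqForm_pl_right, sesqForm_pl_left, sesqForm_pl_left, ← add_div, div_div,
    sqrt_two_mul_self_complex]
  simp only [sesqForm_e3]

lemma sesqForm_pl_mi (k l : Fin 3) :
    sesqForm M (pl i j) (mi k l) = (M i k + M j k - (M i l + M j l)) / 2 := by
  rw [sesqForm_mi_right, sesqForm_pl_left, sesqForm_pl_left, ← sub_div, div_div,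
    sqrt_two_mul_self_complex]
  simp only [sesqForm_e3]

lemma sesqForm_mi_pl (k l : Fin 3) :
    sesqForm M (mi i j) (pl k l) = (M i k - M j k + (M i l - M j l)) / 2 := by
  rw [sesqForm_pl_right, sesqForm_mi_left, sesqForm_mi_left, ← add_div, div_div,
    sqrt_two_mul_self_complex]
  simp only [sesqForm_e3]

lemma sesqForm_mi_mi (k l : Fin 3) :
    sesqForm M (mi i j) (mi k l) = (M i k - M j k - (M i l - M j l)) / 2 := by
  rw [sesqForm_mi_right, sesqForm_mi_left, sesqForm_mi_left, ← sub_div, div_div,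
    sqrt_two_mul_self_complex]
  simp only [sesqForm_e3]

lemma re_sesqForm_pl_add_mi :
    (sesqForm M (pl i j) (pl i j)).re + (sesqForm M (mi i j) (mi i j)).re =
      (M i i).re + (M j j).re := by
  rw [← Complex.add_re, ← Complex.add_re, sesqForm_pl_pl, sesqForm_mi_mi]
  congr 1
  ring

lemma re_sesqForm_pl_mi {M : Matrix (Fin 3) (Fin 3) ℂ} (hM : M.IsHermitian) :
    (sesqForm M (pl i j) (mi i j)).re = ((M i i).re - (M j j).re) / 2 := by
  have h : (M j i).re = (M i j).re := by rw [← hM.apply j i]; simp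
  rw [sesqForm_pl_mi, show (2 : ℂ) = ((2 : ℝ) : ℂ) by norm_num, Complex.div_ofReal_re]
  simp only [Complex.add_re, Complex.sub_re, h]
  ring

end Expansions

/-- A tile with first factor `|p⟩` forces adjacent diagonal entries of `b` to be close. -/
lemma abs_diag_sub_le {δ A : ℝ} {b : Matrix (Fin 3) (Fin 3) ℂ} (hb : b.IsHermitian) {x : ℂ}
    (hA : 0 < A) (hx : x = (A : ℂ)) {i j : Fin 3}
    (h : ‖x‖ * ‖sesqForm b (pl i j) (mi i j)‖ ≤ δ * ((x.re + x.re) / 2 *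
      (((sesqForm b (pl i j) (pl i j)).re + (sesqForm b (mi i j) (mi i j)).re) / 2))) :
    |(b i i).re - (b j j).re| ≤ δ * ((b i i).re + (b j j).re) := by
  rw [re_sesqForm_pl_add_mi, hx, Complex.norm_real, Real.norm_of_nonneg hA.le,
    Complex.ofReal_re] at h
  have h1 := Complex.abs_re_le_norm (sesqForm b (pl i j) (mi i j))
  rw [re_sesqForm_pl_mi _ _ hb, abs_div, abs_two] at h1
  have h2 : ‖sesqForm b (pl i j) (mi i j)‖ ≤ δ * (((b i i).re + (b j j).re) / 2) :=
    le_of_mul_le_mul_left (h.trans_eq (by ring)) hA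
  linarith

/-- The central state against the tile `|p⟩ ⊗ |i ± j⟩` bounds the entry `w` of `a`. -/
lemma norm_mul_le_of_center {b : Matrix (Fin 3) (Fin 3) ℂ} (hb : b.PosSemidef) {w : ℂ}
    {i j : Fin 3} (hij : i = 1 ∨ j = 1) {δ A : ℝ}
    (hp : ‖w‖ * ‖sesqForm b (e3 1) (pl i j)‖ ≤
      δ * (A * (((b 1 1).re + (sesqForm b (pl i j) (pl i j)).re) / 2)))
    (hm : ‖w‖ * ‖sesqForm b (e3 1) (mi i j)‖ ≤
      δ * (A * (((b 1 1).re + (sesqForm b (mi i j) (mi i j)).re) / 2))) :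
    ‖w‖ * (b 1 1).re ≤
      δ * A * ((2 * (b 1 1).re + ((b i i).re + (b j j).re)) / 2) := by
  have h11 := diag_re_nonneg hb 1
  have key : (b 1 1).re ≤ ‖sesqForm b (e3 1) (pl i j)‖ + ‖sesqForm b (e3 1) (mi i j)‖ := by
    have hs : (1 : ℝ) ≤ Real.sqrt 2 := Real.one_le_sqrt.2 (by norm_num)
    have hn : ‖(Real.sqrt 2 : ℂ) * b 1 1‖ = Real.sqrt 2 * (b 1 1).re := by
      rw [diag_eq_re hb 1, ← Complex.ofReal_mul, Complex.norm_real,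
        Real.norm_of_nonneg (by positivity), Complex.ofReal_re]
    have hle : Real.sqrt 2 * (b 1 1).re ≤
        ‖sesqForm b (e3 1) (pl i j)‖ + ‖sesqForm b (e3 1) (mi i j)‖ := by
      rw [← hn]
      have h2 := sqrt_two_mul_self_complex
      have h0 := sqrt_two_complex_ne_zero
      rcases hij with rfl | rfl
      · refine le_of_eq_of_le (congrArg _ ?_) (norm_add_le _ _)
        rw [sesqForm_pl_right, sesqForm_mi_right, sesqForm_e3, sesqForm_e3]
        field_simp
        linear_combination b 1 1 * h2
      · refine le_of_eq_of_le (congrArg _ ?_) (norm_sub_le _ _)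
        rw [sesqForm_pl_right, sesqForm_mi_right, sesqForm_e3, sesqForm_e3]
        field_simp
        linear_combination b 1 1 * h2
    nlinarith
  rw [← re_sesqForm_pl_add_mi b i j]
  nlinarith [mul_le_mul_of_nonneg_left key (norm_nonneg w)]

/-- The tiles `|p⟩ ⊗ |0 ± 1⟩` and `|q⟩ ⊗ |1 ± 2⟩` bound the entry `w` of `a`. -/
lemma norm_mul_le_of_tiles {b : Matrix (Fin 3) (Fin 3) ℂ} {w : ℂ} {δ A : ℝ}
    (hpp : ‖w‖ * ‖sesqForm b (pl 0 1) (pl 1 2)‖ ≤ δ * (A *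
      (((sesqForm b (pl 0 1) (pl 0 1)).re + (sesqForm b (pl 1 2) (pl 1 2)).re) / 2)))
    (hpm : ‖w‖ * ‖sesqForm b (pl 0 1) (mi 1 2)‖ ≤ δ * (A *
      (((sesqForm b (pl 0 1) (pl 0 1)).re + (sesqForm b (mi 1 2) (mi 1 2)).re) / 2)))
    (hmp : ‖w‖ * ‖sesqForm b (mi 0 1) (pl 1 2)‖ ≤ δ * (A *
      (((sesqForm b (mi 0 1) (mi 0 1)).re + (sesqForm b (pl 1 2) (pl 1 2)).re) / 2)))
    (hmm : ‖w‖ * ‖sesqForm b (mi 0 1) (mi 1 2)‖ ≤ δ * (A *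
      (((sesqForm b (mi 0 1) (mi 0 1)).re + (sesqForm b (mi 1 2) (mi 1 2)).re) / 2))) :
    ‖w‖ * (2 * (b 1 1).re) ≤ δ * A * ((b 0 0).re + 2 * (b 1 1).re + (b 2 2).re) := by
  have key : 2 * (b 1 1).re ≤ ‖sesqForm b (pl 0 1) (pl 1 2)‖ + ‖sesqForm b (pl 0 1) (mi 1 2)‖ +
      (‖sesqForm b (mi 0 1) (pl 1 2)‖ + ‖sesqForm b (mi 0 1) (mi 1 2)‖) := by
    have h : 2 * b 1 1 = sesqForm b (pl 0 1) (pl 1 2) + sesqForm b (pl 0 1) (mi 1 2) -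
        (sesqForm b (mi 0 1) (pl 1 2) + sesqForm b (mi 0 1) (mi 1 2)) := by
      rw [sesqForm_pl_pl, sesqForm_pl_mi, sesqForm_mi_pl, sesqForm_mi_mi]
      ring
    calc 2 * (b 1 1).re = (2 * b 1 1).re := by simp
      _ ≤ ‖2 * b 1 1‖ := Complex.re_le_norm _
      _ ≤ _ := by
        rw [h]
        exact (norm_sub_le _ _).trans (add_le_add (norm_add_le _ _) (norm_add_le _ _))
  have e01 := re_sesqForm_pl_add_mi b 0 1
  have e12 := re_sesqForm_pl_add_mi b 1 2
  have hR : (b 0 0).re + 2 * (b 1 1).re + (b 2 2).re =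
      ((sesqForm b (pl 0 1) (pl 0 1)).re + (sesqForm b (mi 0 1) (mi 0 1)).re) +
      ((sesqForm b (pl 1 2) (pl 1 2)).re + (sesqForm b (mi 1 2) (mi 1 2)).re) := by linarith
  rw [hR]
  nlinarith [mul_le_mul_of_nonneg_left key (norm_nonneg w)]

lemma SideBound.abs_diag_sub_le {δ : ℝ} {a b : Matrix (Fin 3) (Fin 3) ℂ} {p q : Fin 3}
    (h : SideBound δ a b p q) (ha : a.PosSemidef) (hb : b.PosSemidef)
    (hp : 0 < (a p p).re) (hq : 0 < (a q q).re) :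
    |(b 0 0).re - (b 1 1).re| ≤ δ * ((b 0 0).re + (b 1 1).re) ∧
      |(b 1 1).re - (b 2 2).re| ≤ δ * ((b 1 1).re + (b 2 2).re) := by
  have h1 := h 1 2 (by decide)
  have h2 := h 3 4 (by decide)
  simp only [sideTiles, Fin.isValue, cons_val, sesqForm_e3] at h1 h2
  exact ⟨_root_.abs_diag_sub_le hb.1 hp (diag_eq_re ha p) h1,
    _root_.abs_diag_sub_le hb.1 hq (diag_eq_re ha q) h2⟩

lemma SideBound.norm_apply_le {δ : ℝ} {a b : Matrix (Fin 3) (Fin 3) ℂ} {p q : Fin 3}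
    (h : SideBound δ a b p q) (ha : a.PosSemidef) (hb : b.PosSemidef) (hδ : 0 ≤ δ)
    (hp : 0 < (a p p).re) (hq : 0 < (a q q).re) (h11 : 0 < (b 1 1).re)
    (hpq : p = 0 ∧ q = 2 ∨ p = 2 ∧ q = 0) {i j : Fin 3} (hij : i ≠ j) :
    ‖a i j‖ ≤ 4 * δ * a.trace.re := by
  have htr : 0 ≤ a.trace.re := (Complex.le_def.1 ha.trace_nonneg).1
  have htrp : ((a 1 1).re + (a p p).re) / 2 ≤ a.trace.re ∧
      ((a 1 1).re + (a q q).re) / 2 ≤ a.trace.re ∧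
      ((a p p).re + (a q q).re) / 2 ≤ a.trace.re := by
    have h0 := diag_re_nonneg ha 0
    have h1 := diag_re_nonneg ha 1
    have h2 := diag_re_nonneg ha 2
    rw [re_trace]
    rcases hpq with ⟨rfl, rfl⟩ | ⟨rfl, rfl⟩ <;> refine ⟨?_, ?_, ?_⟩ <;> linarith
  rcases le_or_gt (1 / 8) δ with hbig | hsmall
  · have := two_mul_norm_apply_le_trace ha hij
    nlinarith
  obtain ⟨hd0, hd2⟩ := h.abs_diag_sub_le ha hb hp hq
  have hb0 := diag_re_nonneg hb 0
  have hb2 := diag_re_nonneg hb 2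
  have hr0 : (b 0 0).re ≤ 9 / 7 * (b 1 1).re := by
    have := (abs_le.1 hd0).2
    nlinarith
  have hr2 : (b 2 2).re ≤ 9 / 7 * (b 1 1).re := by
    have := (abs_le.1 hd2).1
    nlinarith
  have conclude : ∀ {w : ℂ} {A R : ℝ}, A ≤ a.trace.re → 0 ≤ R → R ≤ 4 * (b 1 1).re →
      ‖w‖ * (b 1 1).re ≤ δ * A * R → ‖w‖ ≤ 4 * δ * a.trace.re := by
    intro w A R hA hR0 hR hw
    refine le_of_mul_le_mul_right (hw.trans ?_) h11
    calc δ * A * R ≤ δ * a.trace.re * (4 * (b 1 1).re) := by gcongr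
      _ = _ := by ring
  have b01 := h 0 1 (by decide)
  have b02 := h 0 2 (by decide)
  have b03 := h 0 3 (by decide)
  have b04 := h 0 4 (by decide)
  have b13 := h 1 3 (by decide)
  have b14 := h 1 4 (by decide)
  have b23 := h 2 3 (by decide)
  have b24 := h 2 4 (by decide)
  simp only [sideTiles, Fin.isValue, cons_val, sesqForm_e3]
    at b01 b02 b03 b04 b13 b14 b23 b24
  have h1p : ‖a 1 p‖ ≤ 4 * δ * a.trace.re :=
    conclude htrp.1 (by positivity) (by linarith)
      (norm_mul_le_of_center hb (Or.inr rfl) b01 b02)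
  have h1q : ‖a 1 q‖ ≤ 4 * δ * a.trace.re :=
    conclude htrp.2.1 (by positivity) (by linarith)
      (norm_mul_le_of_center hb (Or.inl rfl) b03 b04)
  have hpq' : ‖a p q‖ ≤ 4 * δ * a.trace.re :=
    conclude (R := ((b 0 0).re + 2 * (b 1 1).re + (b 2 2).re) / 2) htrp.2.2
      (by positivity) (by linarith) (by linarith [norm_mul_le_of_tiles b13 b14 b23 b24])
  have hsymm : ∀ k l, ‖a k l‖ = ‖a l k‖ := fun k l => by rw [← ha.1.apply k l, norm_star]
  rcases hpq with ⟨rfl, rfl⟩ | ⟨rfl, rfl⟩ <;> fin_cases i <;> fin_cases j <;>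
    first
    | exact absurd rfl hij
    | assumption
    | (rw [hsymm]; assumption)

/-- Diagonal entries whose neighbours are `δ`-close are all close to a third of the trace. -/
lemma abs_diag_sub_third_trace_le {δ : ℝ} {M : Matrix (Fin 3) (Fin 3) ℂ} (hM : M.PosSemidef)
    (hδ : 0 ≤ δ) (h : |(M 0 0).re - (M 1 1).re| ≤ δ * ((M 0 0).re + (M 1 1).re) ∧
      |(M 1 1).re - (M 2 2).re| ≤ δ * ((M 1 1).re + (M 2 2).re)) (i : Fin 3) :
    |(M i i).re - M.trace.re / 3| ≤ δ * M.trace.re := by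
  have h0 := mul_nonneg hδ (diag_re_nonneg hM 0)
  have h1 := mul_nonneg hδ (diag_re_nonneg hM 1)
  have h2 := mul_nonneg hδ (diag_re_nonneg hM 2)
  obtain ⟨ha, hb⟩ := h
  rw [abs_le] at ha hb
  rw [re_trace, abs_le]
  fin_cases i <;> simp <;> constructor <;> linarith

/-- The domino basis is `4`-rigid:
`‖(a⊗b)/tr(a⊗b) − I/9‖_max ≤ 4δ`. -/
theorem stmt8
    (a b : Matrix (Fin 3) (Fin 3) ℂ) (ha : a.PosSemidef) (hb : b.PosSemidef)
    (hnz : ∀ i, star (dominoStates i) ⬝ᵥ (a ⊗ₖ b).mulVec (dominoStates i) ≠ 0) :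
    maxEntry (((a ⊗ₖ b).trace)⁻¹ • (a ⊗ₖ b) -
        ((9 : ℂ))⁻¹ • (1 : Matrix (Fin 3 × Fin 3) (Fin 3 × Fin 3) ℂ)) ≤
      4 * disturbance dominoStates a b := by
  have hL := sideBound_left ha hb hnz
  have hR := sideBound_right ha hb hnz
  have hδ : 0 ≤ disturbance dominoStates a b := Real.iSup_nonneg fun p => by positivity
  generalize disturbance dominoStates a b = δ at *
  have hposr : ∀ {M : Matrix (Fin 3) (Fin 3) ℂ}, M.PosSemidef → ∀ k, M k k ≠ 0 →
      0 < (M k k).re := fun hM k hk =>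
    lt_of_le_of_ne (diag_re_nonneg hM k) fun h0 => hk (by rw [diag_eq_re hM k, ← h0]; simp)
  have n0 := hnz 0
  have n1 := hnz 1
  have n3 := hnz 3
  have n5 := hnz 5
  have n7 := hnz 7
  simp only [dominoStates, Fin.isValue, cons_val, sesqForm_kp, sesqForm_e3]
    at n0 n1 n3 n5 n7
  have a0 := hposr ha 0 (left_ne_zero_of_mul n1)
  have a1 := hposr ha 1 (left_ne_zero_of_mul n0)
  have a2 := hposr ha 2 (left_ne_zero_of_mul n3)
  have b0 := hposr hb 0 (right_ne_zero_of_mul n5)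
  have b1 := hposr hb 1 (right_ne_zero_of_mul n0)
  have b2 := hposr hb 2 (right_ne_zero_of_mul n7)
  have oa : ∀ {i j}, i ≠ j → ‖a i j‖ ≤ 4 * δ * a.trace.re := fun hij =>
    hL.norm_apply_le ha hb hδ a0 a2 b1 (Or.inl ⟨rfl, rfl⟩) hij
  have ob : ∀ {i j}, i ≠ j → ‖b i j‖ ≤ 4 * δ * b.trace.re := fun hij =>
    hR.norm_apply_le hb ha hδ b2 b0 a1 (Or.inr ⟨rfl, rfl⟩) hij
  have db := abs_diag_sub_third_trace_le hb hδ (hL.abs_diag_sub_le ha hb a0 a2)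
  have da := abs_diag_sub_third_trace_le ha hδ (hR.abs_diag_sub_le hb ha b2 b0)
  have hA : 0 < a.trace.re := by rw [re_trace]; positivity
  have hB : 0 < b.trace.re := by rw [re_trace]; positivity
  refine ciSup_le fun ⟨⟨i, k⟩, ⟨j, l⟩⟩ => ?_
  have la := norm_apply_le_trace ha i j
  have lb := norm_apply_le_trace hb k l
  rw [trace_kronecker]
  simp only [Matrix.sub_apply, Matrix.smul_apply, smul_eq_mul, kroneckerMap_apply, one_apply,
    Prod.mk.injEq]
  have htr : a.trace * b.trace = ((a.trace.re * b.trace.re : ℝ) : ℂ) := by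
    rw [trace_eq_re ha, trace_eq_re hb]; simp
  rw [htr]
  have hAB : 0 < a.trace.re * b.trace.re := mul_pos hA hB
  by_cases hd : i = j ∧ k = l
  · obtain ⟨rfl, rfl⟩ := hd
    rw [if_pos ⟨rfl, rfl⟩, diag_eq_re ha i, diag_eq_re hb k]
    have hx := da i
    have hy := db k
    have hx1 : (a i i).re ≤ a.trace.re := (Complex.re_le_norm _).trans la
    have hx0 := diag_re_nonneg ha i
    generalize (a i i).re = x at *
    generalize (b k k).re = y at *
    generalize a.trace.re = A at *
    generalize b.trace.re = B at *
    have : ((A * B : ℝ) : ℂ)⁻¹ * (x * y) - 9⁻¹ * 1 = (((x * y - A * B / 9) / (A * B) : ℝ) : ℂ) := by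
      push_cast
      have hA' : (A : ℂ) ≠ 0 := by exact_mod_cast hA.ne'
      have hB' : (B : ℂ) ≠ 0 := by exact_mod_cast hB.ne'
      field_simp
    rw [this, Complex.norm_real, Real.norm_eq_abs, abs_div, abs_of_pos hAB, div_le_iff₀ hAB]
    calc |x * y - A * B / 9| = |x * (y - B / 3) + B / 3 * (x - A / 3)| := by ring_nf
      _ ≤ |x * (y - B / 3)| + |B / 3 * (x - A / 3)| := abs_add_le _ _
      _ = x * |y - B / 3| + B / 3 * |x - A / 3| := by
        rw [abs_mul, abs_mul, abs_of_nonneg hx0, abs_of_pos (by positivity : 0 < B / 3)]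
      _ ≤ A * (δ * B) + B / 3 * (δ * A) := by gcongr
      _ ≤ 4 * δ * (A * B) := by nlinarith [mul_nonneg hδ hAB.le]
  · rw [if_neg hd, mul_zero, sub_zero, norm_mul, norm_inv, Complex.norm_real,
      Real.norm_of_nonneg hAB.le, inv_mul_le_iff₀ hAB, norm_mul]
    rcases not_and_or.1 hd with h | h
    · calc ‖a i j‖ * ‖b k l‖ ≤ (4 * δ * a.trace.re) * b.trace.re := by gcongr; exact oa h
        _ = _ := by ring
    · calc ‖a i j‖ * ‖b k l‖ ≤ a.trace.re * (4 * δ * b.trace.re) := by gcongr; exact ob h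
        _ = _ := by ring
end

section
/- Let 0 < θ ≤ π/4, let a, b ∈ M_3(ℂ) be positive semidefinite with ⟨ψ_i, (a⊗b) ψ_i⟩ ≠ 0 for each of the nine states ψ_i of S_3(θ), and let δ be the disturbance of a⊗b on S_3(θ). If a_{11} ≥ (1/s)·‖a‖_∞ and b_{11} ≥ (1/s)·‖b‖_∞ for some s > 0, then ‖(a⊗b)/tr(a⊗b) − I/9‖_max ≤ 8(1+√2·s)·δ/sin 2θ. -/
open Matrix Kronecker
open scoped ComplexOrder

/-- The nine rotated domino states `S₃(θ₁,θ₂,θ₃,θ₄)` in `ℂ³ ⊗ ℂ³`. -/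
noncomputable def rotDomino (t1 t2 t3 t4 : ℝ) : Fin 9 → Fin 3 × Fin 3 → ℂ :=
  ![kp (e3 1) (e3 1),
    kp (e3 0) (fun k => (Real.cos t1 : ℂ) * e3 0 k + (Real.sin t1 : ℂ) * e3 1 k),
    kp (e3 0) (fun k => -(Real.sin t1 : ℂ) * e3 0 k + (Real.cos t1 : ℂ) * e3 1 k),
    kp (e3 2) (fun k => (Real.cos t2 : ℂ) * e3 1 k + (Real.sin t2 : ℂ) * e3 2 k),
    kp (e3 2) (fun k => -(Real.sin t2 : ℂ) * e3 1 k + (Real.cos t2 : ℂ) * e3 2 k),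
    kp (fun k => (Real.cos t3 : ℂ) * e3 1 k + (Real.sin t3 : ℂ) * e3 2 k) (e3 0),
    kp (fun k => -(Real.sin t3 : ℂ) * e3 1 k + (Real.cos t3 : ℂ) * e3 2 k) (e3 0),
    kp (fun k => (Real.cos t4 : ℂ) * e3 0 k + (Real.sin t4 : ℂ) * e3 1 k) (e3 2),
    kp (fun k => -(Real.sin t4 : ℂ) * e3 0 k + (Real.cos t4 : ℂ) * e3 1 k) (e3 2)]

/-- The operator (spectral) norm of a square complex matrix. -/
noncomputable def opNorm {n : ℕ} (M : Matrix (Fin n) (Fin n) ℂ) : ℝ :=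
  ‖Matrix.toEuclideanCLM (𝕜 := ℂ) M‖

/-- The sesquilinear form `⟨x, a y⟩`. -/
noncomputable def sesq (a : Matrix (Fin 3) (Fin 3) ℂ) (x y : Fin 3 → ℂ) : ℂ :=
  star x ⬝ᵥ a.mulVec y

/-- The state `x ⊗ y` is disturbed relative to `x' ⊗ y'` by at most `δ` under `a ⊗ b`. -/
def DisturbedLe (δ : ℝ) (a b : Matrix (Fin 3) (Fin 3) ℂ) (x y x' y' : Fin 3 → ℂ) : Prop :=
  ‖sesq a x x' * sesq b y y'‖ ≤
    δ * (√((sesq a x x).re * (sesq b y y).re) * √((sesq a x' x').re * (sesq b y' y').re))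

/-- The vector `p|i⟩ + q|j⟩`. -/
noncomputable def comb (p q : ℝ) (i j : Fin 3) : Fin 3 → ℂ :=
  fun k => (p : ℂ) * e3 i k + (q : ℂ) * e3 j k

theorem DisturbedLe.swap {δ : ℝ} {a b : Matrix (Fin 3) (Fin 3) ℂ} {x y x' y' : Fin 3 → ℂ}
    (h : DisturbedLe δ a b x y x' y') : DisturbedLe δ b a y x y' x' := by
  unfold DisturbedLe at *
  rwa [mul_comm (sesq b y y'), mul_comm (sesq b y y).re, mul_comm (sesq b y' y').re]

theorem sesq_kp (a b : Matrix (Fin 3) (Fin 3) ℂ) (x y x' y' : Fin 3 → ℂ) :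
    star (kp x y) ⬝ᵥ (a ⊗ₖ b).mulVec (kp x' y') = sesq a x x' * sesq b y y' := by
  simp only [sesq, kp, dotProduct, mulVec, Fintype.sum_prod_type, kroneckerMap_apply,
    Fin.sum_univ_three, Pi.star_apply, star_mul']
  ring

theorem sesq_e3 (a : Matrix (Fin 3) (Fin 3) ℂ) (i j : Fin 3) : sesq a (e3 i) (e3 j) = a i j := by
  have h : ∀ i, e3 i = Pi.single i 1 := fun i => by
    ext k; simp [e3, Pi.single_apply]
  simp [sesq, h, Pi.star_single]

theorem sesq_comb_right (a : Matrix (Fin 3) (Fin 3) ℂ) (x : Fin 3 → ℂ) (p q : ℝ) (i j : Fin 3) :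
    sesq a x (comb p q i j) = p * sesq a x (e3 i) + q * sesq a x (e3 j) := by
  simp only [sesq, comb, dotProduct, mulVec, Fin.sum_univ_three]
  ring

theorem sesq_comb_left (a : Matrix (Fin 3) (Fin 3) ℂ) (x : Fin 3 → ℂ) (p q : ℝ) (i j : Fin 3) :
    sesq a (comb p q i j) x = p * sesq a (e3 i) x + q * sesq a (e3 j) x := by
  simp only [sesq, comb, dotProduct, mulVec, Fin.sum_univ_three, Pi.star_apply, star_add,
    star_mul', RCLike.star_def, Complex.conj_ofReal]
  ring

theorem sesq_self_nonneg {a : Matrix (Fin 3) (Fin 3) ℂ} (ha : a.PosSemidef) (x : Fin 3 → ℂ) :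
    0 ≤ (sesq a x x).re :=
  (Complex.le_def.1 (ha.dotProduct_mulVec_nonneg x)).1

theorem sesq_self_im {a : Matrix (Fin 3) (Fin 3) ℂ} (ha : a.PosSemidef) (x : Fin 3 → ℂ) :
    (sesq a x x).im = 0 :=
  (Complex.le_def.1 (ha.dotProduct_mulVec_nonneg x)).2.symm

theorem diag_re_nonneg_s13 {a : Matrix (Fin 3) (Fin 3) ℂ} (ha : a.PosSemidef) (i : Fin 3) :
    0 ≤ (a i i).re := by
  simpa only [sesq_e3] using sesq_self_nonneg ha (e3 i)

theorem diag_eq_re_s13 {a : Matrix (Fin 3) (Fin 3) ℂ} (ha : a.PosSemidef) (i : Fin 3) :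
    a i i = ((a i i).re : ℂ) := by
  apply Complex.ext
  · simp
  · simpa only [sesq_e3, Complex.ofReal_im] using sesq_self_im ha (e3 i)

theorem diag_re_le_opNorm (a : Matrix (Fin 3) (Fin 3) ℂ) (i : Fin 3) :
    (a i i).re ≤ opNorm a := by
  have h1 : inner ℂ (EuclideanSpace.single i (1 : ℂ))
      (Matrix.toEuclideanCLM (𝕜 := ℂ) a (EuclideanSpace.single i 1)) = a i i := by
    simp [EuclideanSpace.inner_single_left]
  calc (a i i).re ≤ ‖a i i‖ := Complex.re_le_norm _
    _ ≤ ‖EuclideanSpace.single i (1 : ℂ)‖ *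
        ‖Matrix.toEuclideanCLM (𝕜 := ℂ) a (EuclideanSpace.single i 1)‖ := by
      rw [← h1]; exact norm_inner_le_norm _ _
    _ ≤ opNorm a := by
      have := (Matrix.toEuclideanCLM (𝕜 := ℂ) a).le_opNorm (EuclideanSpace.single i (1 : ℂ))
      simpa [opNorm] using this

theorem norm_comb_le {D p q n₁ n₂ : ℝ} {z₁ z₂ : ℂ} (hD : 0 ≤ D) (hpq : p ^ 2 + q ^ 2 = 1)
    (h₁ : 0 ≤ n₁) (h₂ : 0 ≤ n₂) (hz₁ : ‖z₁‖ ≤ D * √n₁) (hz₂ : ‖z₂‖ ≤ D * √n₂) :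
    ‖p * z₁ + q * z₂‖ ≤ D * √(n₁ + n₂) := by
  have hcs : |p| * √n₁ + |q| * √n₂ ≤ √(n₁ + n₂) := by
    apply Real.le_sqrt_of_sq_le
    nlinarith [sq_nonneg (|p| * √n₂ - |q| * √n₁), Real.sq_sqrt h₁, Real.sq_sqrt h₂, sq_abs p,
      sq_abs q]
  calc ‖p * z₁ + q * z₂‖ ≤ |p| * ‖z₁‖ + |q| * ‖z₂‖ := by
        refine (norm_add_le _ _).trans (le_of_eq ?_)
        simp
    _ ≤ |p| * (D * √n₁) + |q| * (D * √n₂) := by gcongr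
    _ = D * (|p| * √n₁ + |q| * √n₂) := by ring
    _ ≤ D * √(n₁ + n₂) := by gcongr

/-- If `p u + q v` has the matrix element `β` against `y`, a disturbance bound for `x' ⊗ u` and
`x' ⊗ v` relative to `x ⊗ y` bounds `⟨x, a x'⟩ β`. -/
theorem DisturbedLe.comb_right {δ p q : ℝ} {a b : Matrix (Fin 3) (Fin 3) ℂ}
    (ha : a.PosSemidef) (hb : b.PosSemidef) (hδ : 0 ≤ δ) (hpq : p ^ 2 + q ^ 2 = 1)
    {x x' y u v : Fin 3 → ℂ} {β : ℂ}
    (hu : DisturbedLe δ a b x y x' u) (hv : DisturbedLe δ a b x y x' v)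
    (hβ : p * sesq b y u + q * sesq b y v = β) :
    ‖sesq a x x' * β‖ ≤ δ * √((sesq a x x).re * (sesq a x' x').re) *
      √((sesq b u u).re + (sesq b v v).re) * √(sesq b y y).re := by
  have key : ∀ w, DisturbedLe δ a b x y x' w → ‖sesq a x x' * sesq b y w‖ ≤
      (δ * √((sesq a x x).re * (sesq a x' x').re) * √(sesq b y y).re) * √(sesq b w w).re := by
    intro w hw
    refine hw.trans (le_of_eq ?_)
    rw [Real.sqrt_mul (sesq_self_nonneg ha _), Real.sqrt_mul (sesq_self_nonneg ha _),
      Real.sqrt_mul (sesq_self_nonneg ha _)]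
    ring
  have := norm_comb_le (by positivity) hpq (sesq_self_nonneg hb u) (sesq_self_nonneg hb v)
    (key u hu) (key v hv)
  rw [← hβ]
  calc _ = ‖p * (sesq a x x' * sesq b y u) + q * (sesq a x x' * sesq b y v)‖ := by
        congr 1; ring
    _ ≤ _ := this
    _ = _ := by ring

theorem sqrt_mul_le_half_add {x y : ℝ} (hx : 0 ≤ x) (hy : 0 ≤ y) : √(x * y) ≤ (x + y) / 2 := by
  apply Real.sqrt_le_iff.2 ⟨by positivity, ?_⟩
  nlinarith [sq_nonneg (x - y)]

/-- Bound on an entry `⟨1|a|i⟩` from the states `|i⟩ ⊗ u`, `|i⟩ ⊗ v` and `|1⟩ ⊗ |1⟩`. -/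
theorem norm_edge_le {δ p q s : ℝ} {a b : Matrix (Fin 3) (Fin 3) ℂ}
    (ha : a.PosSemidef) (hb : b.PosSemidef) (hδ : 0 ≤ δ) (hpq : p ^ 2 + q ^ 2 = 1)
    {u v : Fin 3 → ℂ} {i : Fin 3}
    (hu : DisturbedLe δ a b (e3 1) (e3 1) (e3 i) u) (hv : DisturbedLe δ a b (e3 1) (e3 1) (e3 i) v)
    (hβ : p * sesq b (e3 1) u + q * sesq b (e3 1) v = b 1 1) (hb1 : 0 < (b 1 1).re)
    (hN : (sesq b u u).re + (sesq b v v).re ≤ 2 * s * (b 1 1).re) :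
    ‖a 1 i‖ ≤ δ * √(2 * s) * (((a 1 1).re + (a i i).re) / 2) := by
  have h := DisturbedLe.comb_right ha hb hδ hpq hu hv hβ
  simp only [sesq_e3] at h
  rw [norm_mul, diag_eq_re_s13 hb 1, Complex.norm_real, Real.norm_of_nonneg hb1.le,
    Complex.ofReal_re] at h
  refine le_of_mul_le_mul_right (h.trans ?_) hb1
  calc _ ≤ δ * (((a 1 1).re + (a i i).re) / 2) * √(2 * s * (b 1 1).re) * √(b 1 1).re := by
        have h₁ := diag_re_nonneg_s13 ha 1
        have h₂ := diag_re_nonneg_s13 ha i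
        gcongr
        exact sqrt_mul_le_half_add h₁ h₂
    _ = δ * √(2 * s) * (((a 1 1).re + (a i i).re) / 2) * (√(b 1 1).re * √(b 1 1).re) := by
        rw [Real.sqrt_mul' _ hb1.le]; ring
    _ = _ := by rw [Real.mul_self_sqrt hb1.le]

/-- Bound on an entry `⟨i|a|j⟩` from the states `|i⟩ ⊗ u`, `|i⟩ ⊗ v`, `|j⟩ ⊗ u'`, `|j⟩ ⊗ v'`. -/
theorem norm_corner_le {δ p q p' q' s : ℝ} {a b : Matrix (Fin 3) (Fin 3) ℂ}
    (ha : a.PosSemidef) (hb : b.PosSemidef) (hδ : 0 ≤ δ) (hs : 0 ≤ s)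
    (hpq : p ^ 2 + q ^ 2 = 1) (hpq' : p' ^ 2 + q' ^ 2 = 1)
    {u v u' v' : Fin 3 → ℂ} {i j : Fin 3}
    (huu : DisturbedLe δ a b (e3 i) u (e3 j) u') (huv : DisturbedLe δ a b (e3 i) u (e3 j) v')
    (hvu : DisturbedLe δ a b (e3 i) v (e3 j) u') (hvv : DisturbedLe δ a b (e3 i) v (e3 j) v')
    (hβ' : ∀ y, p' * sesq b y u' + q' * sesq b y v' = sesq b y (e3 1))
    (hβ : p * sesq b u (e3 1) + q * sesq b v (e3 1) = b 1 1) (hb1 : 0 < (b 1 1).re)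
    (hN : (sesq b u u).re + (sesq b v v).re ≤ 2 * s * (b 1 1).re)
    (hN' : (sesq b u' u').re + (sesq b v' v').re ≤ 2 * s * (b 1 1).re) :
    ‖a i j‖ ≤ δ * (2 * s) * (((a i i).re + (a j j).re) / 2) := by
  have hu := DisturbedLe.comb_right ha hb hδ hpq' huu huv (hβ' u)
  have hv := DisturbedLe.comb_right ha hb hδ hpq' hvu hvv (hβ' v)
  have h := norm_comb_le (by positivity) hpq (sesq_self_nonneg hb u) (sesq_self_nonneg hb v) hu hv
  have e : (p : ℂ) * (sesq a (e3 i) (e3 j) * sesq b u (e3 1)) +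
      q * (sesq a (e3 i) (e3 j) * sesq b v (e3 1)) = a i j * b 1 1 := by
    rw [← hβ, sesq_e3]; ring
  rw [e, norm_mul, diag_eq_re_s13 hb 1, Complex.norm_real, Real.norm_of_nonneg hb1.le] at h
  simp only [sesq_e3] at h
  refine le_of_mul_le_mul_right (h.trans ?_) hb1
  calc _ ≤ δ * (((a i i).re + (a j j).re) / 2) * √(2 * s * (b 1 1).re)
          * √(2 * s * (b 1 1).re) := by
        have h₁ := diag_re_nonneg_s13 ha i
        have h₂ := diag_re_nonneg_s13 ha j
        gcongr
        exact sqrt_mul_le_half_add h₁ h₂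
    _ = _ := by
        rw [mul_assoc _ (√_), Real.mul_self_sqrt (by positivity)]; ring

/-- Bound on the difference of two diagonal entries from two states `u ⊗ |n⟩`, `v ⊗ |n⟩` with
`u, v` the rotated basis of `span {|i⟩, |j⟩}`. -/
theorem abs_diag_sub_le_s13 {δ C S : ℝ} {a b : Matrix (Fin 3) (Fin 3) ℂ}
    (ha : a.PosSemidef) (hb : b.PosSemidef) (hδ : 0 ≤ δ) (hCS : C ^ 2 + S ^ 2 = 1)
    (hpos : 0 ≤ C * S) {i j n : Fin 3} (hbn : 0 < (b n n).re)
    (h : DisturbedLe δ a b (comb C S i j) (e3 n) (comb (-S) C i j) (e3 n)) :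
    2 * C * S * |(a i i).re - (a j j).re| ≤
        δ * ((a i i).re + (a j j).re) + 2 * ‖a i j‖ := by
  have hji : (a j i).re = (a i j).re := by
    rw [← ha.isHermitian.apply i j]; simp
  unfold DisturbedLe at h
  rw [sesq_e3, norm_mul, diag_eq_re_s13 hb n, Complex.norm_real, Real.norm_of_nonneg hbn.le,
    Complex.ofReal_re, Real.sqrt_mul' _ hbn.le, Real.sqrt_mul' _ hbn.le] at h
  have h' : ‖sesq a (comb C S i j) (comb (-S) C i j)‖ ≤
      δ * √((sesq a (comb C S i j) (comb C S i j)).re *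
        (sesq a (comb (-S) C i j) (comb (-S) C i j)).re) := by
    refine le_of_mul_le_mul_right (h.trans (le_of_eq ?_)) hbn
    rw [Real.sqrt_mul (sesq_self_nonneg ha _)]
    conv_rhs => rw [← Real.mul_self_sqrt hbn.le]
    ring
  have h2 := h'.trans (mul_le_mul_of_nonneg_left
    (sqrt_mul_le_half_add (sesq_self_nonneg ha _) (sesq_self_nonneg ha _)) hδ)
  have h3 := (Complex.abs_re_le_norm _).trans h2
  have esum : (sesq a (comb C S i j) (comb C S i j)).re +
      (sesq a (comb (-S) C i j) (comb (-S) C i j)).re = (a i i).re + (a j j).re := by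
    simp only [sesq_comb_left, sesq_comb_right, sesq_e3, Complex.add_re, Complex.re_ofReal_mul]
    linear_combination ((a i i).re + (a j j).re) * hCS
  have ere : (sesq a (comb C S i j) (comb (-S) C i j)).re =
      C * S * ((a j j).re - (a i i).re) + (C ^ 2 - S ^ 2) * (a i j).re := by
    simp only [sesq_comb_left, sesq_comb_right, sesq_e3, Complex.add_re, Complex.re_ofReal_mul,
      hji]
    ring
  rw [esum, ere] at h3
  have h4 : |(C ^ 2 - S ^ 2) * (a i j).re| ≤ ‖a i j‖ := by
    rw [abs_mul]
    have : |C ^ 2 - S ^ 2| ≤ 1 := abs_le.2 ⟨by nlinarith, by nlinarith⟩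
    calc _ ≤ 1 * ‖a i j‖ := by
          gcongr
          exact Complex.abs_re_le_norm _
      _ = _ := one_mul _
  have h5 : C * S * |(a i i).re - (a j j).re| = |C * S * ((a j j).re - (a i i).re)| := by
    rw [abs_mul, abs_of_nonneg hpos, abs_sub_comm]
  have h6 := abs_sub (C * S * ((a j j).re - (a i i).re) + (C ^ 2 - S ^ 2) * (a i j).re)
    ((C ^ 2 - S ^ 2) * (a i j).re)
  rw [add_sub_cancel_right] at h6
  linarith

/-- The local estimates for `a`, where `{m, n} = {0, 2}`; exchanging the tensor factors of the
rotated domino states amounts to exchanging `m` and `n`. -/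
theorem local_bounds {δ C S s : ℝ} {a b : Matrix (Fin 3) (Fin 3) ℂ}
    (ha : a.PosSemidef) (hb : b.PosSemidef) (hδ : 0 ≤ δ) (hCS : C ^ 2 + S ^ 2 = 1)
    (hC : 0 < C) (hS : 0 < S) (hs : 1 ≤ s) {m n : Fin 3}
    (hmn : m = 0 ∧ n = 2 ∨ m = 2 ∧ n = 0)
    (hbpos : ∀ i, 0 < (b i i).re) (hbs : ∀ i, (b i i).re ≤ s * (b 1 1).re)
    (hmu : DisturbedLe δ a b (e3 1) (e3 1) (e3 m) (comb C S 0 1))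
    (hmv : DisturbedLe δ a b (e3 1) (e3 1) (e3 m) (comb (-S) C 0 1))
    (hnu : DisturbedLe δ a b (e3 1) (e3 1) (e3 n) (comb C S 1 2))
    (hnv : DisturbedLe δ a b (e3 1) (e3 1) (e3 n) (comb (-S) C 1 2))
    (huu : DisturbedLe δ a b (e3 m) (comb C S 0 1) (e3 n) (comb C S 1 2))
    (huv : DisturbedLe δ a b (e3 m) (comb C S 0 1) (e3 n) (comb (-S) C 1 2))
    (hvu : DisturbedLe δ a b (e3 m) (comb (-S) C 0 1) (e3 n) (comb C S 1 2))
    (hvv : DisturbedLe δ a b (e3 m) (comb (-S) C 0 1) (e3 n) (comb (-S) C 1 2))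
    (hd : DisturbedLe δ a b (comb C S 0 1) (e3 n) (comb (-S) C 0 1) (e3 n))
    (hd' : DisturbedLe δ a b (comb C S 1 2) (e3 m) (comb (-S) C 1 2) (e3 m)) :
    (∀ i, |(a i i).re - a.trace.re / 3| ≤ (1 + √2 * s) * δ / (2 * C * S) * a.trace.re) ∧
    ∀ i j, i ≠ j → ‖a i j‖ ≤ s * δ * a.trace.re := by
  have hCS0 : 0 < 2 * C * S := by positivity
  have hSC : S ^ 2 + C ^ 2 = 1 := by linarith
  have hSC' : C ^ 2 + (-S) ^ 2 = 1 := by linarith [neg_sq S]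
  have hCSc : (C : ℂ) ^ 2 + (S : ℂ) ^ 2 = 1 := by exact_mod_cast hCS
  have hN : ∀ i j : Fin 3, (sesq b (comb C S i j) (comb C S i j)).re +
      (sesq b (comb (-S) C i j) (comb (-S) C i j)).re ≤ 2 * s * (b 1 1).re := by
    intro i j
    have e : (sesq b (comb C S i j) (comb C S i j)).re +
        (sesq b (comb (-S) C i j) (comb (-S) C i j)).re = (b i i).re + (b j j).re := by
      simp only [sesq_comb_left, sesq_comb_right, sesq_e3, Complex.add_re, Complex.re_ofReal_mul]
      linear_combination ((b i i).re + (b j j).re) * hCS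
    linarith [hbs i, hbs j]
  have hβ : ∀ y, (S : ℂ) * sesq b y (comb C S 0 1) + C * sesq b y (comb (-S) C 0 1) =
      sesq b y (e3 1) := by
    intro y
    simp only [sesq_comb_right, Complex.ofReal_neg]
    linear_combination sesq b y (e3 1) * hCSc
  have hβl : (S : ℂ) * sesq b (comb C S 0 1) (e3 1) + C * sesq b (comb (-S) C 0 1) (e3 1) =
      b 1 1 := by
    simp only [sesq_comb_left, Complex.ofReal_neg, sesq_e3]
    linear_combination b 1 1 * hCSc
  have hβ' : ∀ y, (C : ℂ) * sesq b y (comb C S 1 2) +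
      ((-S : ℝ) : ℂ) * sesq b y (comb (-S) C 1 2) = sesq b y (e3 1) := by
    intro y
    simp only [sesq_comb_right, Complex.ofReal_neg]
    linear_combination sesq b y (e3 1) * hCSc
  have em := norm_edge_le ha hb hδ hSC hmu hmv ((hβ _).trans (sesq_e3 _ _ _)) (hbpos 1)
    (hN 0 1)
  have en := norm_edge_le ha hb hδ hSC' hnu hnv ((hβ' _).trans (sesq_e3 _ _ _)) (hbpos 1)
    (hN 1 2)
  have ec := norm_corner_le ha hb hδ (by linarith) hSC hSC' huu huv hvu hvv hβ' hβl (hbpos 1)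
    (hN 0 1) (hN 1 2)
  have d01 := abs_diag_sub_le_s13 ha hb hδ hCS (by positivity) (hbpos n) hd
  have d12 := abs_diag_sub_le_s13 ha hb hδ hCS (by positivity) (hbpos m) hd'
  have hsym : ∀ i j, ‖a i j‖ = ‖a j i‖ := fun i j => by
    rw [← ha.isHermitian.apply i j, norm_star]
  have ht : a.trace.re = (a 0 0).re + (a 1 1).re + (a 2 2).re := by
    simp [Matrix.trace, Fin.sum_univ_three]
  have a0 := diag_re_nonneg_s13 ha 0
  have a1 := diag_re_nonneg_s13 ha 1
  have a2 := diag_re_nonneg_s13 ha 2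
  have hr : √(2 * s) ≤ √2 * s := by
    rw [Real.sqrt_mul (by norm_num)]
    gcongr
    exact Real.sqrt_le_iff.2 ⟨by linarith, by nlinarith⟩
  have hr2 : √(2 * s) ≤ 2 * s :=
    Real.sqrt_le_iff.2 ⟨by linarith, by nlinarith⟩
  have e10 : ‖a 1 0‖ ≤ δ * √(2 * s) * (((a 1 1).re + (a 0 0).re) / 2) := by
    rcases hmn with ⟨rfl, rfl⟩ | ⟨rfl, rfl⟩ <;> assumption
  have e12 : ‖a 1 2‖ ≤ δ * √(2 * s) * (((a 1 1).re + (a 2 2).re) / 2) := by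
    rcases hmn with ⟨rfl, rfl⟩ | ⟨rfl, rfl⟩ <;> assumption
  have e02 : ‖a 0 2‖ ≤ δ * (2 * s) * (((a 0 0).re + (a 2 2).re) / 2) := by
    rcases hmn with ⟨rfl, rfl⟩ | ⟨rfl, rfl⟩
    · exact ec
    · rw [hsym, add_comm (a 0 0).re]; exact ec
  rw [ht]
  constructor
  · have key : ∀ x y z : ℝ, 0 ≤ x → 0 ≤ y → z ≤ δ * √(2 * s) * ((x + y) / 2) →
        2 * C * S * |x - y| ≤ δ * (x + y) + 2 * z →
        |x - y| ≤ (1 + √2 * s) * δ / (2 * C * S) * (x + y) := by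
      intro x y z hx hy hz h
      rw [div_mul_eq_mul_div, le_div_iff₀ hCS0]
      have : δ * √(2 * s) * ((x + y) / 2) ≤ δ * (√2 * s) * ((x + y) / 2) := by gcongr
      linarith
    have k01 := key _ _ _ a0 a1 (by rw [hsym, add_comm (a 0 0).re]; exact e10) d01
    have k12 := key _ _ _ a1 a2 e12 d12
    have hK : 0 ≤ (1 + √2 * s) * δ / (2 * C * S) := by positivity
    generalize (1 + √2 * s) * δ / (2 * C * S) = K at *
    have p0 := mul_nonneg hK a0
    have p1 := mul_nonneg hK a1
    have p2 := mul_nonneg hK a2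
    rw [abs_le] at k01 k12
    intro i
    rw [abs_le]
    fin_cases i <;> constructor <;> simp <;> linarith
  · have key : ∀ x y w r : ℝ, 0 ≤ x → 0 ≤ y → 0 ≤ w → r ≤ 2 * s →
        δ * r * ((x + y) / 2) ≤ s * δ * (x + y + w) := by
      intro x y w r hx hy hw hrs
      calc _ ≤ δ * (2 * s) * ((x + y) / 2) := by gcongr
        _ = s * δ * (x + y) := by ring
        _ ≤ _ := mul_le_mul_of_nonneg_left (by linarith) (mul_nonneg (by linarith) hδ)
    have f10 := e10.trans (key _ _ _ _ a1 a0 a2 hr2)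
    have f12 := e12.trans (key _ _ _ _ a1 a2 a0 hr2)
    have f02 := e02.trans (key _ _ _ _ a0 a2 a1 le_rfl)
    intro i j hij
    fin_cases i <;> fin_cases j <;> simp at hij ⊢ <;>
      first | linarith | (rw [hsym]; linarith)

theorem norm_apply_le_trace_s13 {a : Matrix (Fin 3) (Fin 3) ℂ} (ha : a.PosSemidef) (i j : Fin 3) :
    ‖a i j‖ ≤ a.trace.re := by
  have hdet := (ha.submatrix ![i, j]).det_nonneg
  have hji : a j i = star (a i j) := (ha.isHermitian.apply j i).symm
  rw [det_fin_two] at hdet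
  simp only [submatrix_apply, cons_val_zero, cons_val_one] at hdet
  rw [hji, diag_eq_re_s13 ha i, diag_eq_re_s13 ha j, RCLike.star_def, Complex.mul_conj] at hdet
  have h : ‖a i j‖ ^ 2 ≤ (a i i).re * (a j j).re := by
    have : (0 : ℝ) ≤ (a i i).re * (a j j).re - Complex.normSq (a i j) := by exact_mod_cast hdet
    rw [Complex.sq_norm]
    linarith
  have ht : ∀ k, (a k k).re ≤ a.trace.re := by
    intro k
    rw [Matrix.trace, Complex.re_sum]
    exact Finset.single_le_sum (f := fun k => (a k k).re) (fun k _ => diag_re_nonneg_s13 ha k)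
      (Finset.mem_univ k)
  have ht0 := (diag_re_nonneg_s13 ha i).trans (ht i)
  refine abs_le_of_sq_le_sq' ?_ ht0 |>.2
  calc _ ≤ _ := h
    _ ≤ a.trace.re * a.trace.re := mul_le_mul (ht i) (ht j) (diag_re_nonneg_s13 ha j) ht0
    _ = _ := (sq _).symm

/-- Entrywise estimate for a normalized product from the local estimates. -/
theorem norm_entry_sub_le {K L : ℝ} {a b : Matrix (Fin 3) (Fin 3) ℂ}
    (ha : a.PosSemidef) (hb : b.PosSemidef)
    (hta : 0 < a.trace.re) (htb : 0 < b.trace.re)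
    (hda : ∀ i, |(a i i).re - a.trace.re / 3| ≤ K * a.trace.re)
    (hdb : ∀ i, |(b i i).re - b.trace.re / 3| ≤ K * b.trace.re)
    (hoa : ∀ i j, i ≠ j → ‖a i j‖ ≤ L * a.trace.re)
    (hob : ∀ i j, i ≠ j → ‖b i j‖ ≤ L * b.trace.re)
    (hL : 0 ≤ L) (hLK : L ≤ K) (P Q : Fin 3 × Fin 3) :
    ‖(((a ⊗ₖ b).trace)⁻¹ • (a ⊗ₖ b) -
        ((9 : ℂ))⁻¹ • (1 : Matrix (Fin 3 × Fin 3) (Fin 3 × Fin 3) ℂ)) P Q‖ ≤ 2 * K := by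
  have htr : ∀ {c : Matrix (Fin 3) (Fin 3) ℂ}, c.PosSemidef → c.trace = (c.trace.re : ℂ) := by
    intro c hc
    rw [Matrix.trace, Complex.re_sum, Complex.ofReal_sum]
    exact Finset.sum_congr rfl fun i _ => diag_eq_re_s13 hc i
  obtain ⟨i, k⟩ := P
  obtain ⟨j, l⟩ := Q
  have hK := hL.trans hLK
  rw [trace_kronecker, htr ha, htr hb]
  simp only [Matrix.sub_apply, Matrix.smul_apply, kroneckerMap_apply, smul_eq_mul]
  have hna := norm_apply_le_trace_s13 ha
  have hnb := norm_apply_le_trace_s13 hb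
  generalize a.trace.re = ta at *
  generalize b.trace.re = tb at *
  by_cases h : i = j ∧ k = l
  · obtain ⟨rfl, rfl⟩ := h
    rw [one_apply_eq, diag_eq_re_s13 ha i, diag_eq_re_s13 hb k]
    have e : ((ta : ℂ) * tb)⁻¹ * (((a i i).re : ℂ) * (b k k).re) - 9⁻¹ * 1 =
        (((a i i).re * (b k k).re - ta * tb / 9) / (ta * tb) : ℝ) := by
      have : (ta : ℂ) ≠ 0 := by exact_mod_cast hta.ne'
      have : (tb : ℂ) ≠ 0 := by exact_mod_cast htb.ne'
      push_cast
      field_simp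
    rw [e, Complex.norm_real, Real.norm_eq_abs, abs_div, abs_of_pos (mul_pos hta htb),
      div_le_iff₀ (mul_pos hta htb)]
    have hai : (a i i).re ≤ ta := (Complex.re_le_norm _).trans (hna i i)
    have e2 : (a i i).re * (b k k).re - ta * tb / 9 =
        (a i i).re * ((b k k).re - tb / 3) + ((a i i).re - ta / 3) * (tb / 3) := by ring
    rw [e2]
    calc _ ≤ |(a i i).re * ((b k k).re - tb / 3)| + |((a i i).re - ta / 3) * (tb / 3)| :=
          abs_add_le _ _
      _ = (a i i).re * |(b k k).re - tb / 3| + |(a i i).re - ta / 3| * (tb / 3) := by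
          rw [abs_mul, abs_mul, abs_of_nonneg (diag_re_nonneg_s13 ha i),
            abs_of_nonneg (by positivity : 0 ≤ tb / 3)]
      _ ≤ ta * (K * tb) + K * ta * (tb / 3) := by
          gcongr
          · exact hdb k
          · exact hda i
      _ ≤ _ := by nlinarith [mul_nonneg hK (mul_pos hta htb).le]
  · have hne : ((i, k) : Fin 3 × Fin 3) ≠ (j, l) := by simpa [Prod.ext_iff] using h
    rw [one_apply_ne hne, mul_zero, sub_zero, norm_mul, norm_inv, norm_mul, norm_mul,
      Complex.norm_real, Complex.norm_real, Real.norm_of_nonneg hta.le,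
      Real.norm_of_nonneg htb.le, inv_mul_le_iff₀ (mul_pos hta htb)]
    have hprod : ‖a i j‖ * ‖b k l‖ ≤ L * (ta * tb) := by
      by_cases hij : i = j
      · have hkl : k ≠ l := fun hkl => h ⟨hij, hkl⟩
        calc _ ≤ ta * (L * tb) :=
              mul_le_mul (hna i j) (hob k l hkl) (norm_nonneg _) hta.le
          _ = _ := by ring
      · calc _ ≤ L * ta * tb :=
              mul_le_mul (hoa i j hij) (hnb k l) (norm_nonneg _) (by positivity)
          _ = _ := by ring
    have hpos := mul_pos hta htb
    nlinarith [mul_le_mul_of_nonneg_right hLK hpos.le, mul_nonneg hK hpos.le]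

/-- For the rotated domino states `S₃(θ)` and any `s > 0`: if
`a₁₁ ≥ (1/s)·‖a‖_∞` and `b₁₁ ≥ (1/s)·‖b‖_∞`, then
`‖(a⊗b)/tr(a⊗b) − I/9‖_max ≤ 8(1+√2·s)·δ/sin 2θ`. -/
theorem stmt13
    (th : ℝ) (hth : 0 < th ∧ th ≤ Real.pi / 4)
    (a b : Matrix (Fin 3) (Fin 3) ℂ) (ha : a.PosSemidef) (hb : b.PosSemidef)
    (hnz : ∀ i, star (rotDomino th th th th i) ⬝ᵥ
      (a ⊗ₖ b).mulVec (rotDomino th th th th i) ≠ 0)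
    (s : ℝ) (hs : 0 < s)
    (ha11 : (a 1 1).re ≥ (1 / s) * opNorm a)
    (hb11 : (b 1 1).re ≥ (1 / s) * opNorm b) :
    maxEntry (((a ⊗ₖ b).trace)⁻¹ • (a ⊗ₖ b) -
        ((9 : ℂ))⁻¹ • (1 : Matrix (Fin 3 × Fin 3) (Fin 3 × Fin 3) ℂ)) ≤
      8 * (1 + Real.sqrt 2 * s) * disturbance (rotDomino th th th th) a b /
        Real.sin (2 * th) := by
  obtain ⟨hth0, hth1⟩ := hth
  have hπ := Real.pi_pos
  have hS : 0 < Real.sin th := Real.sin_pos_of_pos_of_lt_pi hth0 (by linarith)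
  have hC : 0 < Real.cos th := Real.cos_pos_of_mem_Ioo ⟨by linarith, by linarith⟩
  have hCS : Real.cos th ^ 2 + Real.sin th ^ 2 = 1 := Real.cos_sq_add_sin_sq th
  have hsin : Real.sin (2 * th) = 2 * Real.cos th * Real.sin th := by
    rw [Real.sin_two_mul]; ring
  have hsin1 := Real.sin_le_one (2 * th)
  rw [hsin] at hsin1 ⊢
  set δ := disturbance (rotDomino th th th th) a b with hδdef
  generalize hCdef : Real.cos th = C at *
  generalize hSdef : Real.sin th = S at *
  let X : Fin 9 → Fin 3 → ℂ := ![e3 1, e3 0, e3 0, e3 2, e3 2, comb C S 1 2, comb (-S) C 1 2,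
    comb C S 0 1, comb (-S) C 0 1]
  let Y : Fin 9 → Fin 3 → ℂ := ![e3 1, comb C S 0 1, comb (-S) C 0 1, comb C S 1 2,
    comb (-S) C 1 2, e3 0, e3 0, e3 2, e3 2]
  have hψ : ∀ i, rotDomino th th th th i = kp (X i) (Y i) := by
    intro i
    ext p
    fin_cases i <;> simp [rotDomino, X, Y, kp, comb, hCdef, hSdef]
  have hnz' : ∀ i, sesq a (X i) (X i) ≠ 0 ∧ sesq b (Y i) (Y i) ≠ 0 := by
    intro i
    have := hnz i
    rw [hψ, sesq_kp] at this
    exact ⟨left_ne_zero_of_mul this, right_ne_zero_of_mul this⟩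
  have hpos : ∀ {c : Matrix (Fin 3) (Fin 3) ℂ} {x : Fin 3 → ℂ}, c.PosSemidef →
      sesq c x x ≠ 0 → 0 < (sesq c x x).re := by
    intro c x hc hx
    refine lt_of_le_of_ne (sesq_self_nonneg hc x) fun h => hx ?_
    exact Complex.ext h.symm (sesq_self_im hc x)
  have hre : ∀ i, (sesq a (X i) (X i) * sesq b (Y i) (Y i)).re =
      (sesq a (X i) (X i)).re * (sesq b (Y i) (Y i)).re := by
    intro i
    rw [Complex.mul_re, sesq_self_im ha, zero_mul, sub_zero]
  have hapos : ∀ i, 0 < (a i i).re := by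
    intro i
    have h0 := hpos ha (hnz' 1).1
    have h1 := hpos ha (hnz' 0).1
    have h2 := hpos ha (hnz' 3).1
    simp only [X, cons_val, sesq_e3] at h0 h1 h2
    fin_cases i <;> assumption
  have hbpos : ∀ i, 0 < (b i i).re := by
    intro i
    have h0 := hpos hb (hnz' 5).2
    have h1 := hpos hb (hnz' 0).2
    have h2 := hpos hb (hnz' 7).2
    simp only [Y, cons_val, sesq_e3] at h0 h1 h2
    fin_cases i <;> assumption
  have hdiag : ∀ c : Matrix (Fin 3) (Fin 3) ℂ, (c 1 1).re ≥ 1 / s * opNorm c →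
      ∀ i, (c i i).re ≤ s * (c 1 1).re := by
    intro c hc i
    have h : opNorm c ≤ s * (c 1 1).re := by
      rwa [ge_iff_le, one_div, inv_mul_le_iff₀ hs] at hc
    exact (diag_re_le_opNorm c i).trans h
  have hs1 : 1 ≤ s := by
    have := hdiag a ha11 1
    exact le_of_mul_le_mul_right (by linarith) (hapos 1)
  have hδ : 0 ≤ δ := by
    rw [hδdef, disturbance]
    exact Real.iSup_nonneg fun p => by positivity
  have hD : ∀ i j, i ≠ j → DisturbedLe δ a b (X i) (Y i) (X j) (Y j) := by
    intro i j hij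
    have hle := le_ciSup (Set.finite_range (fun p : {q : Fin 9 × Fin 9 // q.1 ≠ q.2} =>
      ‖star (rotDomino th th th th p.1.1) ⬝ᵥ (a ⊗ₖ b).mulVec (rotDomino th th th th p.1.2)‖ /
      Real.sqrt ((star (rotDomino th th th th p.1.1) ⬝ᵥ
          (a ⊗ₖ b).mulVec (rotDomino th th th th p.1.1)).re *
        (star (rotDomino th th th th p.1.2) ⬝ᵥ
          (a ⊗ₖ b).mulVec (rotDomino th th th th p.1.2)).re))).bddAbove ⟨(i, j), hij⟩
    have hi := mul_pos (hpos ha (hnz' i).1) (hpos hb (hnz' i).2)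
    have hj := mul_pos (hpos ha (hnz' j).1) (hpos hb (hnz' j).2)
    simp only [hψ, sesq_kp, hre] at hle
    rw [div_le_iff₀ (Real.sqrt_pos.2 (mul_pos hi hj)), Real.sqrt_mul hi.le] at hle
    unfold DisturbedLe
    simpa only [hδdef, disturbance, hψ, sesq_kp, hre] using hle
  obtain ⟨hda, hoa⟩ := local_bounds (m := 0) (n := 2) ha hb hδ hCS hC hS hs1 (.inl ⟨rfl, rfl⟩)
    hbpos (hdiag b hb11)
    (hD 0 1 (by decide)) (hD 0 2 (by decide)) (hD 0 3 (by decide)) (hD 0 4 (by decide))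
    (hD 1 3 (by decide)) (hD 1 4 (by decide)) (hD 2 3 (by decide)) (hD 2 4 (by decide))
    (hD 7 8 (by decide)) (hD 5 6 (by decide))
  obtain ⟨hdb, hob⟩ := local_bounds (m := 2) (n := 0) hb ha hδ hCS hC hS hs1 (.inr ⟨rfl, rfl⟩)
    hapos (hdiag a ha11)
    (hD 0 7 (by decide)).swap (hD 0 8 (by decide)).swap (hD 0 5 (by decide)).swap
    (hD 0 6 (by decide)).swap (hD 7 5 (by decide)).swap (hD 7 6 (by decide)).swap
    (hD 8 5 (by decide)).swap (hD 8 6 (by decide)).swap (hD 1 2 (by decide)).swap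
    (hD 3 4 (by decide)).swap
  have hta : 0 < a.trace.re := by
    rw [Matrix.trace, Complex.re_sum]
    exact Finset.sum_pos (fun i _ => hapos i) Finset.univ_nonempty
  have htb : 0 < b.trace.re := by
    rw [Matrix.trace, Complex.re_sum]
    exact Finset.sum_pos (fun i _ => hbpos i) Finset.univ_nonempty
  have hCS0 : 0 < 2 * C * S := by positivity
  have hLK : s * δ ≤ (1 + √2 * s) * δ / (2 * C * S) := by
    rw [le_div_iff₀ hCS0]
    have h2 : 1 ≤ √2 := Real.one_le_sqrt.2 (by norm_num)
    calc s * δ * (2 * C * S) ≤ s * δ * 1 := by gcongr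
      _ ≤ (1 + √2 * s) * δ := by rw [mul_one]; gcongr; nlinarith
  have hK : 0 ≤ (1 + √2 * s) * δ / (2 * C * S) := by positivity
  refine ciSup_le fun p =>
    (norm_entry_sub_le ha hb hta htb hda hdb hoa hob (by positivity) hLK p.1 p.2).trans ?_
  calc _ ≤ 8 * ((1 + √2 * s) * δ / (2 * C * S)) := by linarith
    _ = _ := by ring
end
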